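/- arXiv:2509.09287 — 2 statements merged into one kernel-verified Lean document; each statement's English description precedes it below -/
import Mathlib

section
/- Let j : ℝ^d → ℝ be locally Lipschitz and let δ₁ ≥ 0. Then the following two conditions are equivalent: (a) relaxed monotonicity: for all ξ₁, ξ₂ ∈ ℝ^d and all η₁ ∈ ∂j(ξ₁), η₂ ∈ ∂j(ξ₂) one has (η₁ − η₂)·(ξ₁ − ξ₂) ≥ −δ₁|ξ₁ − ξ₂|²; (b) for all ξ₁, ξ₂ ∈ ℝ^d, j⁰(ξ₁; ξ₂ − ξ₁) + j⁰(ξ₂; ξ₁ − ξ₂) ≤ δ₁|ξ₁ − ξ₂|². -/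
open Filter Topology
open scoped RealInnerProductSpace

/-- The Clarke generalized directional derivative of `f` at `x` in the direction `v`:
`f⁰(x; v) = limsup_{y → x, λ ↓ 0} (f (y + λ v) - f y) / λ`. -/
noncomputable def clarkeDeriv {X : Type*} [NormedAddCommGroup X] [NormedSpace ℝ X]
    (f : X → ℝ) (x v : X) : ℝ :=
  Filter.limsup (fun p : X × ℝ => (f (p.1 + p.2 • v) - f p.1) / p.2)
    ((𝓝 x) ×ˢ (𝓝[>] (0 : ℝ)))

/-- The Clarke subdifferential of `f` at `x`, identified with a subset of the space itself
via the inner product: `∂f(x) = {η : ⟪η, v⟫ ≤ f⁰(x; v) for all v}`. -/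
def clarkeSubdiffInner {X : Type*} [NormedAddCommGroup X] [InnerProductSpace ℝ X]
    (f : X → ℝ) (x : X) : Set X :=
  {η | ∀ v : X, ⟪η, v⟫ ≤ clarkeDeriv f x v}

/-!
For `f` Lipschitz near `x`, the function `v ↦ f⁰(x; v)` is sublinear and dominated by `K * ‖v‖`, so
by Hahn–Banach and Riesz representation it is the support function of `∂f(x)`, and every value
`f⁰(x; v)` is attained by some `η ∈ ∂f(x)`. Since
`⟪η₁ - η₂, ξ₁ - ξ₂⟫ = -(⟪η₁, ξ₂ - ξ₁⟫ + ⟪η₂, ξ₁ - ξ₂⟫)`, maximizing over `η₁` and `η₂` turns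
relaxed monotonicity into the two-point bound.
-/

section Sublinear

variable {E : Type*} [AddCommGroup E] [Module ℝ E] {p : E → ℝ}

lemma map_zero_of_pos_homogeneous (p_smul : ∀ c : ℝ, 0 < c → ∀ x, p (c • x) = c * p x) :
    p 0 = 0 := by
  have := p_smul 2 two_pos 0
  rw [smul_zero] at this
  linarith

lemma mul_le_map_smul_of_sublinear (p_smul : ∀ c : ℝ, 0 < c → ∀ x, p (c • x) = c * p x)
    (p_add_le : ∀ x y, p (x + y) ≤ p x + p y) (c : ℝ) (v : E) : c * p v ≤ p (c • v) := by
  have p_zero := map_zero_of_pos_homogeneous p_smul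
  rcases lt_trichotomy c 0 with hc | rfl | hc
  · have := p_add_le (c • v) (-c • v)
    rw [← add_smul, add_neg_cancel, zero_smul, p_zero, p_smul (-c) (neg_pos.2 hc)] at this
    linarith
  · simp [p_zero]
  · exact (p_smul c hc v).ge

lemma exists_linearMap_le_and_eq_of_sublinear
    (p_smul : ∀ c : ℝ, 0 < c → ∀ x, p (c • x) = c * p x)
    (p_add_le : ∀ x y, p (x + y) ≤ p x + p y) (v : E) :
    ∃ g : E →ₗ[ℝ] ℝ, (∀ x, g x ≤ p x) ∧ g v = p v := by
  have smul_map_eq_zero : ∀ c : ℝ, c • v = 0 → c • p v = 0 := by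
    intro c hcv
    rcases smul_eq_zero.1 hcv with rfl | rfl
    · exact zero_smul ℝ _
    · rw [map_zero_of_pos_homogeneous p_smul, smul_zero]
  let onLine := LinearPMap.mkSpanSingleton' (σ := .id ℝ) v (p v) smul_map_eq_zero
  have onLine_le : ∀ x : onLine.domain, onLine x ≤ p x := by
    rintro ⟨x, hx⟩
    obtain ⟨c, rfl⟩ := Submodule.mem_span_singleton.1 hx
    exact (LinearPMap.mkSpanSingleton'_apply ..).trans_le
      (mul_le_map_smul_of_sublinear p_smul p_add_le c v)
  obtain ⟨g, g_eq, g_le⟩ := exists_extension_of_le_sublinear onLine p p_smul p_add_le onLine_le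
  exact ⟨g, g_le, (g_eq ⟨v, Submodule.mem_span_singleton_self v⟩).trans
    (LinearPMap.mkSpanSingleton'_apply_self ..)⟩

end Sublinear

lemma abs_le_of_linearMap_le_mul_norm {E : Type*} [SeminormedAddCommGroup E] [Module ℝ E]
    {g : E →ₗ[ℝ] ℝ} {C : ℝ} (hg : ∀ x, g x ≤ C * ‖x‖) (x : E) : |g x| ≤ C * ‖x‖ :=
  abs_le'.2 ⟨hg x, by simpa only [map_neg, norm_neg] using hg (-x)⟩

open scoped Pointwise in
lemma limsup_const_mul_of_pos {α : Type*} {l : Filter α} {c : ℝ} (hc : 0 < c) (u : α → ℝ) :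
    limsup (fun a ↦ c * u a) l = c * limsup u l := by
  have upperBounds_eq : {b | ∀ᶠ a in l, c * u a ≤ b} = c • {b | ∀ᶠ a in l, u a ≤ b} := by
    ext b
    simp only [Set.mem_smul_set_iff_inv_smul_mem₀ hc.ne', Set.mem_ofPred_eq, smul_eq_mul,
      le_inv_mul_iff₀ hc]
  rw [limsup_eq, limsup_eq, upperBounds_eq, Real.sInf_smul_of_nonneg hc.le, smul_eq_mul]

lemma map_const_mul_nhdsGT_zero {𝕜 : Type*} [Field 𝕜] [LinearOrder 𝕜] [IsStrictOrderedRing 𝕜]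
    [TopologicalSpace 𝕜] [OrderTopology 𝕜] {c : 𝕜} (hc : 0 < c) :
    map (c * ·) (𝓝[>] 0) = 𝓝[>] 0 := by
  conv_lhs => rw [← comap_mulLeft_nhdsGT_zero hc]
  exact map_comap_of_surjective (mul_left_surjective₀ hc.ne') _

section ClarkeDeriv

variable {X : Type*} [NormedAddCommGroup X] [NormedSpace ℝ X]

/-- The difference quotient of `f` in the direction `v` with base point `p.1` and step `p.2`, whose
limsup is the Clarke directional derivative. -/
noncomputable def clarkeQuotient (f : X → ℝ) (v : X) (p : X × ℝ) : ℝ :=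
  (f (p.1 + p.2 • v) - f p.1) / p.2

/-- The filter of base points tending to `x` and steps tending to `0` from the right, along which
the Clarke directional derivative at `x` is a limsup. -/
abbrev clarkeFilter (x : X) : Filter (X × ℝ) := 𝓝 x ×ˢ 𝓝[>] 0

lemma clarkeDeriv_eq_limsup (f : X → ℝ) (x v : X) :
    clarkeDeriv f x v = limsup (clarkeQuotient f v) (clarkeFilter x) := rfl

lemma clarkeQuotient_add (f : X → ℝ) (v w : X) (p : X × ℝ) :
    clarkeQuotient f (v + w) p =
      clarkeQuotient f v p + clarkeQuotient f w (p.1 + p.2 • v, p.2) := by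
  simp only [clarkeQuotient, smul_add, ← add_assoc]
  ring

lemma clarkeQuotient_smul (f : X → ℝ) {c : ℝ} (hc : c ≠ 0) (v : X) (p : X × ℝ) :
    clarkeQuotient f (c • v) p = c * clarkeQuotient f v (p.1, c * p.2) := by
  simp only [clarkeQuotient, smul_smul, mul_comm p.2 c]
  field_simp

lemma clarkeDeriv_smul (f : X → ℝ) (x : X) {c : ℝ} (hc : 0 < c) (v : X) :
    clarkeDeriv f x (c • v) = c * clarkeDeriv f x v := by
  have map_rescale : map (Prod.map id (c * ·)) (clarkeFilter x) = clarkeFilter x := by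
    rw [← prod_map_map_eq', map_id, map_const_mul_nhdsGT_zero hc]
  calc clarkeDeriv f x (c • v)
      = limsup (fun p ↦ c * (clarkeQuotient f v ∘ Prod.map id (c * ·)) p) (clarkeFilter x) :=
        congrArg (limsup · _) (funext (clarkeQuotient_smul f hc.ne' v))
    _ = c * limsup (clarkeQuotient f v ∘ Prod.map id (c * ·)) (clarkeFilter x) :=
        limsup_const_mul_of_pos hc _
    _ = c * clarkeDeriv f x v := by rw [limsup_comp, map_rescale, clarkeDeriv_eq_limsup]

lemma tendsto_add_smul_clarkeFilter (x v : X) :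
    Tendsto (fun p : X × ℝ ↦ p.1 + p.2 • v) (clarkeFilter x) (𝓝 x) := by
  have shift_tendsto : Tendsto (fun p : X × ℝ ↦ p.1 + p.2 • v) (𝓝 (x, 0)) (𝓝 x) :=
    Continuous.tendsto' (by fun_prop) _ _ (by simp)
  rw [nhds_prod_eq] at shift_tendsto
  exact shift_tendsto.mono_left (prod_mono_right _ nhdsWithin_le_nhds)

lemma tendsto_shift_clarkeFilter (x v : X) :
    Tendsto (fun p : X × ℝ ↦ (p.1 + p.2 • v, p.2)) (clarkeFilter x) (clarkeFilter x) :=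
  (tendsto_add_smul_clarkeFilter x v).prodMk tendsto_snd

variable {f : X → ℝ} {x : X} {K : NNReal} {s : Set X}

lemma eventually_abs_clarkeQuotient_le (hs : s ∈ 𝓝 x) (hf : LipschitzOnWith K f s) (v : X) :
    ∀ᶠ p in clarkeFilter x, |clarkeQuotient f v p| ≤ K * ‖v‖ := by
  filter_upwards [tendsto_snd.eventually self_mem_nhdsWithin,
    (tendsto_add_smul_clarkeFilter x v).eventually hs, tendsto_fst.eventually hs]
    with p (step_pos : 0 < p.2) shifted_mem base_mem
  rw [clarkeQuotient, abs_div, abs_of_pos step_pos, div_le_iff₀ step_pos]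
  calc |f (p.1 + p.2 • v) - f p.1|
      ≤ K * ‖p.1 + p.2 • v - p.1‖ := hf.norm_sub_le shifted_mem base_mem
    _ = K * ‖v‖ * p.2 := by
        rw [add_sub_cancel_left, norm_smul, Real.norm_of_nonneg step_pos.le]
        ring

lemma isBoundedUnder_le_clarkeQuotient (hs : s ∈ 𝓝 x) (hf : LipschitzOnWith K f s) (v : X) :
    IsBoundedUnder (· ≤ ·) (clarkeFilter x) (clarkeQuotient f v) :=
  (isBoundedUnder_le_abs.1
    (isBoundedUnder_of_eventually_le (eventually_abs_clarkeQuotient_le hs hf v))).1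

lemma isBoundedUnder_ge_clarkeQuotient (hs : s ∈ 𝓝 x) (hf : LipschitzOnWith K f s) (v : X) :
    IsBoundedUnder (· ≥ ·) (clarkeFilter x) (clarkeQuotient f v) :=
  (isBoundedUnder_le_abs.1
    (isBoundedUnder_of_eventually_le (eventually_abs_clarkeQuotient_le hs hf v))).2

lemma clarkeDeriv_le_mul_norm (hs : s ∈ 𝓝 x) (hf : LipschitzOnWith K f s) (v : X) :
    clarkeDeriv f x v ≤ K * ‖v‖ :=
  limsup_le_of_le (isBoundedUnder_ge_clarkeQuotient hs hf v).isCoboundedUnder_le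
    ((eventually_abs_clarkeQuotient_le hs hf v).mono fun _ ↦ le_of_abs_le)

lemma clarkeDeriv_add_le (hs : s ∈ 𝓝 x) (hf : LipschitzOnWith K f s) (v w : X) :
    clarkeDeriv f x (v + w) ≤ clarkeDeriv f x v + clarkeDeriv f x w := by
  let shift : X × ℝ → X × ℝ := fun p ↦ (p.1 + p.2 • v, p.2)
  have shift_tendsto : Tendsto shift (clarkeFilter x) (clarkeFilter x) :=
    tendsto_shift_clarkeFilter x v
  have bddAbove := isBoundedUnder_le_clarkeQuotient hs hf
  have bddBelow := isBoundedUnder_ge_clarkeQuotient hs hf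
  have shifted_cobdd : IsCoboundedUnder (· ≤ ·) (clarkeFilter x) (clarkeQuotient f w ∘ shift) :=
    (shift_tendsto.isBoundedUnder_comp (bddBelow w)).isCoboundedUnder_le
  calc clarkeDeriv f x (v + w)
      = limsup (clarkeQuotient f v + clarkeQuotient f w ∘ shift) (clarkeFilter x) :=
        congrArg (limsup · _) (funext (clarkeQuotient_add f v w))
    _ ≤ clarkeDeriv f x v + limsup (clarkeQuotient f w ∘ shift) (clarkeFilter x) :=
        limsup_add_le (bddBelow v) (bddAbove v) shifted_cobdd
          (shift_tendsto.isBoundedUnder_comp (bddAbove w))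
    _ ≤ clarkeDeriv f x v + clarkeDeriv f x w :=
        add_le_add_right (shift_tendsto.limsup_comp_le_limsup shifted_cobdd (bddAbove w)) _

lemma exists_strongDual_le_clarkeDeriv_and_eq (hs : s ∈ 𝓝 x) (hf : LipschitzOnWith K f s)
    (v : X) : ∃ g : StrongDual ℝ X, (∀ w, g w ≤ clarkeDeriv f x w) ∧ g v = clarkeDeriv f x v := by
  obtain ⟨g, g_le, g_eq⟩ := exists_linearMap_le_and_eq_of_sublinear
    (fun _ ↦ clarkeDeriv_smul f x) (clarkeDeriv_add_le hs hf) v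
  have g_bound := abs_le_of_linearMap_le_mul_norm fun w ↦
    (g_le w).trans (clarkeDeriv_le_mul_norm hs hf w)
  exact ⟨g.mkContinuous K g_bound, g_le, g_eq⟩

end ClarkeDeriv

section ClarkeSubdiffInner

variable {X : Type*} [NormedAddCommGroup X] [InnerProductSpace ℝ X] [CompleteSpace X] {f : X → ℝ}

lemma exists_mem_clarkeSubdiffInner_inner_eq {x : X} {K : NNReal} {s : Set X} (hs : s ∈ 𝓝 x)
    (hf : LipschitzOnWith K f s) (v : X) :
    ∃ η ∈ clarkeSubdiffInner f x, ⟪η, v⟫ = clarkeDeriv f x v := by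
  obtain ⟨g, g_le, g_eq⟩ := exists_strongDual_le_clarkeDeriv_and_eq hs hf v
  have inner_eq (w : X) : ⟪(InnerProductSpace.toDual ℝ X).symm g, w⟫ = g w :=
    InnerProductSpace.toDual_symm_apply
  exact ⟨_, fun w ↦ (inner_eq w).trans_le (g_le w), (inner_eq v).trans g_eq⟩

lemma clarkeDeriv_add_clarkeDeriv_le_iff (hf : LocallyLipschitz f) {x y v w : X} {c : ℝ} :
    clarkeDeriv f x v + clarkeDeriv f y w ≤ c ↔
      ∀ η₁ ∈ clarkeSubdiffInner f x, ∀ η₂ ∈ clarkeSubdiffInner f y, ⟪η₁, v⟫ + ⟪η₂, w⟫ ≤ c := by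
  refine ⟨fun bound η₁ hη₁ η₂ hη₂ ↦ (add_le_add (hη₁ v) (hη₂ w)).trans bound, fun bound ↦ ?_⟩
  obtain ⟨_, _, hs, hfs⟩ := hf x
  obtain ⟨_, _, ht, hft⟩ := hf y
  obtain ⟨η₁, hη₁, inner_eq₁⟩ := exists_mem_clarkeSubdiffInner_inner_eq hs hfs v
  obtain ⟨η₂, hη₂, inner_eq₂⟩ := exists_mem_clarkeSubdiffInner_inner_eq ht hft w
  exact inner_eq₁ ▸ inner_eq₂ ▸ bound η₁ hη₁ η₂ hη₂

theorem relaxedMonotone_iff_clarkeDeriv_bound_general (hf : LocallyLipschitz f) (δ : ℝ) :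
    (∀ ξ₁ ξ₂ : X, ∀ η₁ ∈ clarkeSubdiffInner f ξ₁, ∀ η₂ ∈ clarkeSubdiffInner f ξ₂,
      ⟪η₁ - η₂, ξ₁ - ξ₂⟫ ≥ -δ * ‖ξ₁ - ξ₂‖ ^ 2) ↔
    (∀ ξ₁ ξ₂ : X,
      clarkeDeriv f ξ₁ (ξ₂ - ξ₁) + clarkeDeriv f ξ₂ (ξ₁ - ξ₂) ≤ δ * ‖ξ₁ - ξ₂‖ ^ 2) := by
  have inner_sub_sub (η₁ η₂ ξ₁ ξ₂ : X) :
      ⟪η₁ - η₂, ξ₁ - ξ₂⟫ = -(⟪η₁, ξ₂ - ξ₁⟫ + ⟪η₂, ξ₁ - ξ₂⟫) := by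
    rw [inner_sub_left, ← neg_sub ξ₂ ξ₁, inner_neg_right, inner_neg_right]
    ring
  simp only [clarkeDeriv_add_clarkeDeriv_le_iff hf, inner_sub_sub, ge_iff_le, neg_mul,
    neg_le_neg_iff]

end ClarkeSubdiffInner

/-- Relaxed monotonicity of the Clarke subdifferential of a locally Lipschitz
`j : ℝ^d → ℝ` is equivalent to the two-point bound on Clarke directional derivatives. -/
theorem relaxedMonotone_iff_clarkeDeriv_bound {d : ℕ}
    (j : EuclideanSpace ℝ (Fin d) → ℝ) (hj : LocallyLipschitz j)
    (δ₁ : ℝ) (hδ₁ : 0 ≤ δ₁) :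
    (∀ ξ₁ ξ₂ : EuclideanSpace ℝ (Fin d),
      ∀ η₁ ∈ clarkeSubdiffInner j ξ₁, ∀ η₂ ∈ clarkeSubdiffInner j ξ₂,
        ⟪η₁ - η₂, ξ₁ - ξ₂⟫ ≥ -δ₁ * ‖ξ₁ - ξ₂‖ ^ 2) ↔
    (∀ ξ₁ ξ₂ : EuclideanSpace ℝ (Fin d),
      clarkeDeriv j ξ₁ (ξ₂ - ξ₁) + clarkeDeriv j ξ₂ (ξ₁ - ξ₂) ≤ δ₁ * ‖ξ₁ - ξ₂‖ ^ 2) :=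
  relaxedMonotone_iff_clarkeDeriv_bound_general hj δ₁
end

section
/- Let q ≥ 1 be real. Then for all a, b ∈ ℝ^d, |(|a|^{q−1}a − |b|^{q−1}b)·(a − b)| ≤ q·2^{q−1}(|a|^{q−1} + |b|^{q−1})|a − b|². -/
open scoped RealInnerProductSpace

/-!
The map `a ↦ ‖a‖ ^ (q - 1) • a` satisfies a Lipschitz bound with constant
`q * max ‖a‖ ‖b‖ ^ (q - 1)`, and the estimate follows by Cauchy–Schwarz. For the Lipschitz bound
with `‖b‖ ≤ ‖a‖`, split the difference as
`‖a‖ ^ (q - 1) • (a - b) + (‖a‖ ^ (q - 1) - ‖b‖ ^ (q - 1)) • b`; since `t ↦ t ^ q` lies above its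
tangent line at `‖a‖`, the second term contributes at most
`(q - 1) * ‖a‖ ^ (q - 1) * (‖a‖ - ‖b‖)`.
-/

theorem rpow_sub_one_mul_self {x q : ℝ} (hx : 0 ≤ x) (hq : q ≠ 0) : x ^ (q - 1) * x = x ^ q := by
  rw [← Real.rpow_add_one' hx (by simpa using hq), sub_add_cancel]

theorem rpow_add_mul_sub_le_rpow {q s t : ℝ} (hq : 1 ≤ q) (hs : 0 ≤ s) (ht : 0 ≤ t) :
    s ^ q + q * s ^ (q - 1) * (t - s) ≤ t ^ q := by
  have hq0 : q ≠ 0 := by positivity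
  rcases hs.eq_or_lt with rfl | hs
  · rcases hq.eq_or_lt with rfl | hq
    · simp
    · simpa [Real.zero_rpow hq0, Real.zero_rpow (sub_pos.2 hq).ne'] using Real.rpow_nonneg ht q
  · have bernoulli : 1 + q * (t / s - 1) ≤ (t / s) ^ q := by
      simpa using one_add_mul_self_le_rpow_one_add (s := t / s - 1)
        (by linarith [div_nonneg ht hs.le]) hq
    calc s ^ q + q * s ^ (q - 1) * (t - s)
        = (1 + q * (t / s - 1)) * s ^ q := by
          rw [← rpow_sub_one_mul_self hs.le hq0]
          field_simp
      _ ≤ (t / s) ^ q * s ^ q := by gcongr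
      _ = t ^ q := by rw [← Real.mul_rpow (by positivity) hs.le, div_mul_cancel₀ t hs.ne']

theorem max_rpow_le_two_rpow_mul_add {x y p : ℝ} (hx : 0 ≤ x) (hy : 0 ≤ y) (hp : 0 ≤ p) :
    max x y ^ p ≤ 2 ^ p * (x ^ p + y ^ p) :=
  calc max x y ^ p
      = max (x ^ p) (y ^ p) := Real.rpow_max hx hy hp
    _ ≤ x ^ p + y ^ p := max_le_add_of_nonneg (by positivity) (by positivity)
    _ ≤ 2 ^ p * (x ^ p + y ^ p) :=
        le_mul_of_one_le_left (by positivity) (Real.one_le_rpow one_le_two hp)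

theorem norm_rpow_smul_sub_le_of_norm_le {E : Type*} [SeminormedAddCommGroup E] [NormedSpace ℝ E]
    {q : ℝ} (hq : 1 ≤ q) {a b : E} (hba : ‖b‖ ≤ ‖a‖) :
    ‖‖a‖ ^ (q - 1) • a - ‖b‖ ^ (q - 1) • b‖ ≤ q * ‖a‖ ^ (q - 1) * ‖a - b‖ := by
  have hq0 : q ≠ 0 := by positivity
  have hpow : ‖b‖ ^ (q - 1) ≤ ‖a‖ ^ (q - 1) :=
    Real.rpow_le_rpow (norm_nonneg b) hba (sub_nonneg.2 hq)
  have radial : (‖a‖ ^ (q - 1) - ‖b‖ ^ (q - 1)) * ‖b‖ ≤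
      (q - 1) * ‖a‖ ^ (q - 1) * (‖a‖ - ‖b‖) := by
    have tangent := rpow_add_mul_sub_le_rpow hq (norm_nonneg a) (norm_nonneg b)
    rw [← rpow_sub_one_mul_self (norm_nonneg a) hq0,
      ← rpow_sub_one_mul_self (norm_nonneg b) hq0] at tangent
    linarith
  calc ‖‖a‖ ^ (q - 1) • a - ‖b‖ ^ (q - 1) • b‖
      = ‖‖a‖ ^ (q - 1) • (a - b) + (‖a‖ ^ (q - 1) - ‖b‖ ^ (q - 1)) • b‖ := by
        congr 1
        module
    _ ≤ ‖a‖ ^ (q - 1) * ‖a - b‖ + (‖a‖ ^ (q - 1) - ‖b‖ ^ (q - 1)) * ‖b‖ := by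
        refine norm_add_le_of_le (norm_smul_of_nonneg ?_ _).le (norm_smul_of_nonneg ?_ _).le
        · positivity
        · exact sub_nonneg.2 hpow
    _ ≤ ‖a‖ ^ (q - 1) * ‖a - b‖ + (q - 1) * ‖a‖ ^ (q - 1) * (‖a‖ - ‖b‖) := by gcongr
    _ ≤ ‖a‖ ^ (q - 1) * ‖a - b‖ + (q - 1) * ‖a‖ ^ (q - 1) * ‖a - b‖ := by
        have := sub_nonneg.2 hq
        gcongr
        exact norm_sub_norm_le a b
    _ = q * ‖a‖ ^ (q - 1) * ‖a - b‖ := by ring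

theorem norm_rpow_smul_sub_le {E : Type*} [SeminormedAddCommGroup E] [NormedSpace ℝ E]
    {q : ℝ} (hq : 1 ≤ q) (a b : E) :
    ‖‖a‖ ^ (q - 1) • a - ‖b‖ ^ (q - 1) • b‖ ≤ q * max ‖a‖ ‖b‖ ^ (q - 1) * ‖a - b‖ := by
  rcases le_total ‖b‖ ‖a‖ with hba | hab
  · rw [max_eq_left hba]
    exact norm_rpow_smul_sub_le_of_norm_le hq hba
  · rw [max_eq_right hab, norm_sub_rev, norm_sub_rev a]
    exact norm_rpow_smul_sub_le_of_norm_le hq hab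

theorem power_nonlinearity_pairing_estimate_general {E : Type*} [SeminormedAddCommGroup E]
    [InnerProductSpace ℝ E] {q : ℝ} (hq : 1 ≤ q) (a b : E) :
    |⟪‖a‖ ^ (q - 1) • a - ‖b‖ ^ (q - 1) • b, a - b⟫| ≤
      q * max ‖a‖ ‖b‖ ^ (q - 1) * ‖a - b‖ ^ 2 :=
  calc |⟪‖a‖ ^ (q - 1) • a - ‖b‖ ^ (q - 1) • b, a - b⟫|
      ≤ ‖‖a‖ ^ (q - 1) • a - ‖b‖ ^ (q - 1) • b‖ * ‖a - b‖ := abs_real_inner_le_norm _ _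
    _ ≤ q * max ‖a‖ ‖b‖ ^ (q - 1) * ‖a - b‖ * ‖a - b‖ := by
        gcongr
        exact norm_rpow_smul_sub_le hq a b
    _ = q * max ‖a‖ ‖b‖ ^ (q - 1) * ‖a - b‖ ^ 2 := by ring

/-- Pointwise estimate: for `q ≥ 1` and `a, b ∈ ℝ^d`,
`|(|a|^{q-1}a − |b|^{q-1}b)·(a − b)| ≤ q·2^{q-1}(|a|^{q-1} + |b|^{q-1})|a − b|²`. -/
theorem power_nonlinearity_pairing_estimate {d : ℕ} (q : ℝ) (hq : 1 ≤ q) :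
    ∀ a b : EuclideanSpace ℝ (Fin d),
      |⟪(‖a‖ ^ (q - 1)) • a - (‖b‖ ^ (q - 1)) • b, a - b⟫| ≤
        q * 2 ^ (q - 1) * (‖a‖ ^ (q - 1) + ‖b‖ ^ (q - 1)) * ‖a - b‖ ^ 2 := by
  intro a b
  grw [power_nonlinearity_pairing_estimate_general hq a b, max_rpow_le_two_rpow_mul_add
    (norm_nonneg a) (norm_nonneg b) (sub_nonneg.2 hq), ← mul_assoc q]
end
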